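/- (Uniqueness via the transform.) Let U₁ and U₂ be two Lévy measures on ℝ (measures with Uⱼ({0}) = 0 and ∫_ℝ min(1, x²) Uⱼ(dx) < ∞). If ∫_ℝ e^{izx} · 2(1 − sin x/x) U₁(dx) = ∫_ℝ e^{izx} · 2(1 − sin x/x) U₂(dx) for every z ∈ ℝ, then U₁ = U₂. -/

import Mathlib

open MeasureTheory

/-! Write `w x = 2 (1 - sin x / x)`. The transform of `U` is the characteristic function of the
measure with density `w` with respect to `U`, which is finite since `w x ≤ 4 min(1, x²)`.
Characteristic functions determine finite measures, and `w` vanishes only at the `U`-null point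
`0`, so dividing by `w` recovers `U`. -/

open scoped RealInnerProductSpace

lemma eq_of_withDensity_eq {α : Type*} [MeasurableSpace α] {μ ν : Measure α} {f : α → ENNReal}
    (hfμ : AEMeasurable f μ) (hfν : AEMeasurable f ν)
    (hμ_ne_zero : ∀ᵐ x ∂μ, f x ≠ 0) (hν_ne_zero : ∀ᵐ x ∂ν, f x ≠ 0)
    (hμ_ne_top : ∀ᵐ x ∂μ, f x ≠ ⊤) (hν_ne_top : ∀ᵐ x ∂ν, f x ≠ ⊤)
    (h : μ.withDensity f = ν.withDensity f) : μ = ν := by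
  rw [← withDensity_inv_same₀ hfμ hμ_ne_zero hμ_ne_top, h,
    withDensity_inv_same₀ hfν hν_ne_zero hν_ne_top]

lemma charFun_withDensity_ofReal {E : Type*} [MeasurableSpace E] [Inner ℝ E] {μ : Measure E}
    {w : E → ℝ} (hw : AEMeasurable w μ) (hw_nonneg : 0 ≤ᵐ[μ] w) (t : E) :
    charFun (μ.withDensity fun x ↦ ENNReal.ofReal (w x)) t
      = ∫ x, Complex.exp (⟪x, t⟫ * Complex.I) * w x ∂μ := by
  rw [charFun_apply, integral_withDensity_eq_integral_toReal_smul₀ hw.ennreal_ofReal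
    (.of_forall fun _ ↦ ENNReal.ofReal_lt_top)]
  refine integral_congr_ae ?_
  filter_upwards [hw_nonneg] with x hx
  rw [ENNReal.toReal_ofReal hx, Complex.real_smul, mul_comm]

theorem eq_of_integral_exp_inner_mul_eq {E : Type*} [NormedAddCommGroup E] [InnerProductSpace ℝ E]
    [CompleteSpace E] [SecondCountableTopology E] [MeasurableSpace E] [BorelSpace E]
    {μ ν : Measure E} {w : E → ℝ} (hwμ : Integrable w μ) (hwν : Integrable w ν)
    (hμ_pos : ∀ᵐ x ∂μ, 0 < w x) (hν_pos : ∀ᵐ x ∂ν, 0 < w x)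
    (h : ∀ t : E, ∫ x, Complex.exp (⟪x, t⟫ * Complex.I) * w x ∂μ
      = ∫ x, Complex.exp (⟪x, t⟫ * Complex.I) * w x ∂ν) : μ = ν := by
  have := isFiniteMeasure_withDensity_ofReal hwμ.hasFiniteIntegral
  have := isFiniteMeasure_withDensity_ofReal hwν.hasFiniteIntegral
  refine eq_of_withDensity_eq hwμ.aemeasurable.ennreal_ofReal hwν.aemeasurable.ennreal_ofReal
    (hμ_pos.mono fun x hx ↦ (ENNReal.ofReal_pos.2 hx).ne')
    (hν_pos.mono fun x hx ↦ (ENNReal.ofReal_pos.2 hx).ne')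
    (.of_forall fun _ ↦ ENNReal.ofReal_ne_top) (.of_forall fun _ ↦ ENNReal.ofReal_ne_top)
    (Measure.ext_of_charFun (funext fun t ↦ ?_))
  rw [charFun_withDensity_ofReal hwμ.aemeasurable (hμ_pos.mono fun _ ↦ le_of_lt),
    charFun_withDensity_ofReal hwν.aemeasurable (hν_pos.mono fun _ ↦ le_of_lt), h t]

lemma sinc_lt_one {x : ℝ} (hx : x ≠ 0) : Real.sinc x < 1 := by
  rw [Real.sinc_of_ne_zero hx]
  calc Real.sin x / x ≤ |Real.sin x| / |x| := abs_div (Real.sin x) x ▸ le_abs_self _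
    _ < 1 := (div_lt_one (abs_pos.2 hx)).2 (Real.abs_sin_lt_abs hx)

lemma one_sub_sq_div_six_le_sinc (x : ℝ) : 1 - x ^ 2 / 6 ≤ Real.sinc x := by
  wlog hx : 0 ≤ x generalizing x
  · simpa only [neg_sq, Real.sinc_neg] using this (-x) (by linarith)
  rcases hx.eq_or_lt with rfl | hx_pos
  · simp
  · rw [Real.sinc_of_ne_zero hx_pos.ne', le_div_iff₀ hx_pos]
    linarith [Real.sin_ge_sub_cube hx]

/-- The weight `2 (1 - sin x / x)`, by which a Lévy measure is multiplied to obtain a finite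
measure; going through `Real.sinc` gives it the value `0` at `x = 0`. -/
noncomputable def sincWeight (x : ℝ) : ℝ := 2 * (1 - Real.sinc x)

lemma sincWeight_eq_ite (x : ℝ) :
    sincWeight x = if x = 0 then 0 else 2 * (1 - Real.sin x / x) := by
  by_cases hx : x = 0 <;> simp [sincWeight, Real.sinc_apply, hx]

lemma continuous_sincWeight : Continuous sincWeight := by
  unfold sincWeight
  fun_prop

lemma sincWeight_nonneg (x : ℝ) : 0 ≤ sincWeight x := by
  unfold sincWeight
  linarith [Real.sinc_le_one x]

lemma sincWeight_pos {x : ℝ} (hx : x ≠ 0) : 0 < sincWeight x := by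
  unfold sincWeight
  linarith [sinc_lt_one hx]

lemma ae_sincWeight_pos {U : Measure ℝ} (hU : U {0} = 0) : ∀ᵐ x ∂U, 0 < sincWeight x :=
  (measure_eq_zero_iff_ae_notMem.1 hU).mono fun _ hx ↦ sincWeight_pos hx

lemma sincWeight_le_four_mul_min (x : ℝ) : sincWeight x ≤ 4 * min 1 (x ^ 2) := by
  rw [mul_min_of_nonneg _ _ zero_le_four, le_min_iff, sincWeight]
  constructor
  · linarith [Real.neg_one_le_sinc x]
  · linarith [one_sub_sq_div_six_le_sinc x, sq_nonneg x]

lemma integrable_sincWeight {U : Measure ℝ}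
    (hU : ∫⁻ x, ENNReal.ofReal (min 1 (x ^ 2)) ∂U < ⊤) : Integrable sincWeight U := by
  have hmin : Integrable (fun x : ℝ ↦ min 1 (x ^ 2)) U :=
    ⟨by fun_prop, (hasFiniteIntegral_iff_ofReal (.of_forall fun x ↦ by positivity)).2 hU⟩
  refine (hmin.const_mul 4).mono' continuous_sincWeight.aestronglyMeasurable
    (.of_forall fun x ↦ ?_)
  rw [Real.norm_of_nonneg (sincWeight_nonneg x)]
  exact sincWeight_le_four_mul_min x

/-- **uniqueness via the transform.** If two Lévy measures `U₁`, `U₂` on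
`ℝ` have the same transform `z ↦ ∫_ℝ e^{izx} · 2(1 − sin x/x) U(dx)` (with `1 − sin x/x`
interpreted as `0` at `x = 0`), then `U₁ = U₂`. -/
theorem statement18
    (U₁ U₂ : Measure ℝ)
    (hU₁0 : U₁ {0} = 0) (hU₂0 : U₂ {0} = 0)
    (hU₁fin : ∫⁻ x, ENNReal.ofReal (min 1 (x ^ 2)) ∂U₁ < ⊤)
    (hU₂fin : ∫⁻ x, ENNReal.ofReal (min 1 (x ^ 2)) ∂U₂ < ⊤)
    (heq : ∀ z : ℝ,
      (∫ x, Complex.exp (Complex.I * (z : ℂ) * (x : ℂ)) *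
          ((if x = 0 then 0 else 2 * (1 - Real.sin x / x) : ℝ) : ℂ) ∂U₁)
        = ∫ x, Complex.exp (Complex.I * (z : ℂ) * (x : ℂ)) *
            ((if x = 0 then 0 else 2 * (1 - Real.sin x / x) : ℝ) : ℂ) ∂U₂) :
    U₁ = U₂ := by
  refine eq_of_integral_exp_inner_mul_eq (integrable_sincWeight hU₁fin)
    (integrable_sincWeight hU₂fin) (ae_sincWeight_pos hU₁0) (ae_sincWeight_pos hU₂0) fun z ↦ ?_
  have hexp (x : ℝ) : (⟪x, z⟫ : ℂ) * Complex.I = Complex.I * z * x := by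
    rw [Real.inner_apply]
    push_cast
    ring
  simpa only [hexp, sincWeight_eq_ite] using heq z
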